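/- Let u, v ∈ F₂ with ‖u‖ ≥ ‖v‖, let ψ = σψ₁ where ψ₁ is a chain of type (C1) containing at least ‖u‖+1 factors of σ, and put k = ‖u‖+1. Suppose that for every chain ψ' of type (C1) with |ψ'| ≤ |ψ| one has: ‖σ^{k+1}ψ'(u)‖ = ‖σ^{k}ψ'(u)‖ if and only if ‖σ^{k+1}ψ'(v)‖ = ‖σ^{k}ψ'(v)‖, and ‖τ^{k+1}ψ'(u)‖ = ‖τ^{k}ψ'(u)‖ if and only if ‖τ^{k+1}ψ'(v)‖ = ‖τ^{k}ψ'(v)‖. If ‖τψ(u)‖ = ‖ψ(u)‖ or ‖τψ(v)‖ = ‖ψ(v)‖, then both ‖σψ₁(u)‖ = ‖ψ₁(u)‖ and ‖σψ₁(v)‖ = ‖ψ₁(v)‖. -/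

import Mathlib

noncomputable section

/-- The free group of rank two. -/
abbrev F : Type := FreeGroup (Fin 2)

/-- The generator `a`. -/
def ga : F := FreeGroup.of 0

/-- The generator `b`. -/
def gb : F := FreeGroup.of 1

/-- Build an automorphism of `F` from images of the generators together with
an explicit inverse. -/
def mkAut (x y xi yi : F)
    (h1 : FreeGroup.lift ![xi, yi] x = ga)
    (h2 : FreeGroup.lift ![xi, yi] y = gb)
    (h3 : FreeGroup.lift ![x, y] xi = ga)
    (h4 : FreeGroup.lift ![x, y] yi = gb) : MulAut F :=
  MonoidHom.toMulEquiv (FreeGroup.lift ![x, y]) (FreeGroup.lift ![xi, yi])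
    (by
      ext i
      fin_cases i
      · simpa [ga] using h1
      · simpa [gb] using h2)
    (by
      ext i
      fin_cases i
      · simpa [ga] using h3
      · simpa [gb] using h4)

/-- `σ : a ↦ ab, b ↦ b`. -/
def σ : MulAut F :=
  mkAut (ga * gb) gb (ga * gb⁻¹) gb
    (by simp [ga, gb]) (by simp [ga, gb]) (by simp [ga, gb]) (by simp [ga, gb])

/-- `τ : a ↦ a, b ↦ ba`. -/
def τ : MulAut F :=
  mkAut ga (gb * ga) ga (gb * ga⁻¹)
    (by simp [ga, gb]) (by simp [ga, gb]) (by simp [ga, gb]) (by simp [ga, gb])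

/-- `δ₁ : a ↦ b⁻¹ab, b ↦ b`. -/
def δ₁ : MulAut F :=
  mkAut (gb⁻¹ * ga * gb) gb (gb * ga * gb⁻¹) gb
    (by simp [ga, gb, mul_assoc]) (by simp [ga, gb]) (by simp [ga, gb, mul_assoc]) (by simp [ga, gb])

/-- `δ₂ : a ↦ bab⁻¹, b ↦ b`. -/
def δ₂ : MulAut F :=
  mkAut (gb * ga * gb⁻¹) gb (gb⁻¹ * ga * gb) gb
    (by simp [ga, gb, mul_assoc]) (by simp [ga, gb]) (by simp [ga, gb, mul_assoc]) (by simp [ga, gb])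

/-- `δ₃ : a ↦ a, b ↦ a⁻¹ba`. -/
def δ₃ : MulAut F :=
  mkAut ga (ga⁻¹ * gb * ga) ga (ga * gb * ga⁻¹)
    (by simp [ga, gb]) (by simp [ga, gb, mul_assoc]) (by simp [ga, gb]) (by simp [ga, gb, mul_assoc])

/-- `δ₄ : a ↦ a, b ↦ aba⁻¹`. -/
def δ₄ : MulAut F :=
  mkAut ga (ga * gb * ga⁻¹) ga (ga⁻¹ * gb * ga)
    (by simp [ga, gb]) (by simp [ga, gb, mul_assoc]) (by simp [ga, gb]) (by simp [ga, gb, mul_assoc])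

/-- `π : a ↦ b, b ↦ a⁻¹`. -/
def pi' : MulAut F :=
  mkAut gb ga⁻¹ gb⁻¹ ga
    (by simp [ga, gb]) (by simp [ga, gb]) (by simp [ga, gb]) (by simp [ga, gb])

/-- Word length of (the reduced word representing) an element of `F`. -/
def len (w : F) : ℕ := w.toWord.length

/-- Cyclic length: minimal word length among all conjugates. -/
def cyclen (w : F) : ℕ := sInf {n | ∃ g : F, len (g * w * g⁻¹) = n}

/-- The chain `τ^{m_k}σ^{l_k}⋯τ^{m_1}σ^{l_1}` of type (C1) determined by the list
`[(l_k, m_k), …, (l_1, m_1)]` of pairs of exponents. -/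
def chainC1 (c : List (ℕ × ℕ)) : MulAut F :=
  (c.map fun p => τ ^ p.2 * σ ^ p.1).prod

/-- The chain `τ^{-m_k}σ^{-l_k}⋯τ^{-m_1}σ^{-l_1}` of type (C2) determined by the list
`[(l_k, m_k), …, (l_1, m_1)]` of pairs of exponents. -/
def chainC2 (c : List (ℕ × ℕ)) : MulAut F :=
  (c.map fun p => (τ ^ p.2)⁻¹ * (σ ^ p.1)⁻¹).prod

/-- Number of factors of `σ` in a chain. -/
def sigmaCount (c : List (ℕ × ℕ)) : ℕ := (c.map Prod.fst).sum

/-- Number of factors of `τ` in a chain. -/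
def tauCount (c : List (ℕ × ℕ)) : ℕ := (c.map Prod.snd).sum

/-- The length `Σ (l_i + m_i)` of a chain. -/
def chainLen (c : List (ℕ × ℕ)) : ℕ := sigmaCount c + tauCount c

/-- A Whitehead automorphism of type (W1): it permutes `{a, a⁻¹, b, b⁻¹}`. -/
def IsW1 (β : MulAut F) : Prop :=
  β ga ∈ ({ga, ga⁻¹, gb, gb⁻¹} : Set F) ∧ β gb ∈ ({ga, ga⁻¹, gb, gb⁻¹} : Set F)

/-- A chain of type (C1). -/
def IsC1 (φ : MulAut F) : Prop := ∃ c : List (ℕ × ℕ), c ≠ [] ∧ φ = chainC1 c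

/-- A chain of type (C2). -/
def IsC2 (φ : MulAut F) : Prop := ∃ c : List (ℕ × ℕ), c ≠ [] ∧ φ = chainC2 c

/-- A positive element: a product of the generators `a` and `b`. -/
def IsPositive (w : F) : Prop := w ∈ Submonoid.closure ({ga, gb} : Set F)

/-- The four automorphisms `δ₁, δ₂, δ₃, δ₄`. -/
def δIdx : Fin 4 → MulAut F := ![δ₁, δ₂, δ₃, δ₄]

/-!
Write the cyclic word of an element as blocks `b ^ n` separated by letters `a^{±1}`, and call a
letter `b^{±1}` trapped if the nearest letters `a^{±1}` on both of its sides have the opposite sign.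
Applying `σ` removes one trapped letter from every block that has any. Applying `τ` creates none:
a letter `b^{±1}` that is trapped afterwards already had neighbours `a^{±1}` of the opposite sign.
So the cyclic word of `ψ₁(u)` has no trapped letter as soon as `ψ₁` contains `‖u‖` factors of `σ`.

Let `A`, `B` count the letters `a^{±1}`, `b^{±1}` of a cyclic word `y`, and let `s` count its sign
changes. Then `‖σy‖ = ‖y‖ + A - s` and, symmetrically, `‖τy‖ = ‖y‖ + B - s`. If `y` has no trapped
letter, then `A ≥ s`, the numbers `A` and `s` are the same for `σy`, and `σy` has `B ≥ A`.
Hence `‖σ ^ (j + 1) y‖ = ‖σ ^ j y‖` means `A = s` for every `j`, and `‖τσy‖ = ‖σy‖` forces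
`s = B ≥ A ≥ s`, that is, `‖σy‖ = ‖y‖`.
-/

open FreeGroup (IsCyclicallyReduced reduceCyclically)

theorem cyclen_le_norm_conj (x g : F) : cyclen x ≤ (g * x * g⁻¹).norm :=
  Nat.sInf_le ⟨g, rfl⟩

theorem exists_norm_conj_eq_cyclen (x : F) : ∃ g : F, (g * x * g⁻¹).norm = cyclen x :=
  Nat.sInf_mem (s := {n | ∃ g : F, len (g * x * g⁻¹) = n}) ⟨_, 1, rfl⟩

theorem cyclen_eq_of_isConj {x y : F} (h : IsConj x y) : cyclen x = cyclen y := by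
  obtain ⟨c, rfl⟩ := isConj_iff.1 h
  unfold cyclen
  congr 1
  ext n
  constructor
  · rintro ⟨g, rfl⟩
    exact ⟨g * c⁻¹, by congr 1; group⟩
  · rintro ⟨g, rfl⟩
    exact ⟨g * c, by congr 1; group⟩

section CyclicallyReduced

variable {α : Type*}

theorem isCyclicallyReduced_cons_iff {x : α × Bool} {l : List (α × Bool)} :
    IsCyclicallyReduced (x :: l) ↔ FreeGroup.IsReduced (x :: l ++ [x]) := by
  rw [IsCyclicallyReduced, FreeGroup.IsReduced, FreeGroup.IsReduced, List.isChain_append]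
  simp

theorem isCyclicallyReduced_append_swap {l m : List (α × Bool)}
    (h : IsCyclicallyReduced (l ++ m)) : IsCyclicallyReduced (m ++ l) := by
  rcases l with _ | ⟨x, l⟩
  · simpa using h
  rcases m with _ | ⟨y, m⟩
  · simpa using h
  have hsplit : FreeGroup.IsReduced ((x :: l) ++ y :: (m ++ [x])) := by
    simpa using isCyclicallyReduced_cons_iff.1 h
  rw [FreeGroup.IsReduced, List.isChain_split] at hsplit
  have hmerge : FreeGroup.IsReduced ((y :: m) ++ x :: (l ++ [y])) :=
    List.isChain_split.2 ⟨hsplit.2, hsplit.1⟩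
  exact isCyclicallyReduced_cons_iff.2 (by simpa using hmerge)

variable [DecidableEq α]

theorem freeGroup_norm_pow_le (x : FreeGroup α) (n : ℕ) : (x ^ n).norm ≤ n * x.norm := by
  induction n with
  | zero => simp
  | succ n ih =>
    calc (x ^ (n + 1)).norm ≤ (x ^ n).norm + x.norm := by
          rw [pow_succ]; exact FreeGroup.norm_mul_le _ _
      _ ≤ (n + 1) * x.norm := by linarith

theorem norm_mk_pow_of_isCyclicallyReduced {L : List (α × Bool)} (h : IsCyclicallyReduced L)
    (n : ℕ) : (FreeGroup.mk L ^ n).norm = n * L.length := by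
  rw [FreeGroup.pow_mk, FreeGroup.norm, FreeGroup.toWord_mk,
    (h.flatten_replicate n).isReduced.reduce_eq]
  simp

/- `‖yⁿ‖ / n` tends to the cyclic length, and conjugation by `g` changes `‖yⁿ‖` by at most
the constant `2‖g‖`. -/
theorem length_le_norm_conj_of_isCyclicallyReduced {L : List (α × Bool)}
    (h : IsCyclicallyReduced L) (g : FreeGroup α) : L.length ≤ (g * FreeGroup.mk L * g⁻¹).norm := by
  set y := g * FreeGroup.mk L * g⁻¹ with hy
  have key (n : ℕ) : n * L.length ≤ n * y.norm + 2 * g.norm := by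
    calc n * L.length = (g⁻¹ * y ^ n * g).norm := by
          rw [← norm_mk_pow_of_isCyclicallyReduced h, hy, conj_pow]; congr 1; group
      _ ≤ (g⁻¹).norm + (y ^ n).norm + g.norm :=
          (FreeGroup.norm_mul_le _ _).trans (by gcongr; exact FreeGroup.norm_mul_le _ _)
      _ ≤ n * y.norm + 2 * g.norm := by
          rw [FreeGroup.norm_inv_eq]; linarith [freeGroup_norm_pow_le y n]
  by_contra! hlt
  nlinarith [key (2 * g.norm + 1)]

end CyclicallyReduced

theorem exists_append_of_isRotated {β : Type*} {L L' : List β} (h : L ~r L') :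
    ∃ l m, L = l ++ m ∧ L' = m ++ l := by
  obtain ⟨n, rfl⟩ := h
  exact ⟨_, _, (List.take_append_drop (n % L.length) L).symm,
    List.rotate_eq_drop_append_take_mod⟩

/-- `L` is a cyclically reduced word spelling a conjugate of `x`, that is, `L` is one of the
linear forms of the cyclic word of `x`. -/
structure IsCyclicRep (x : F) (L : List (Fin 2 × Bool)) : Prop where
  isCyclicallyReduced : IsCyclicallyReduced L
  isConj : IsConj x (FreeGroup.mk L)

theorem exists_isCyclicRep (x : F) : ∃ L, IsCyclicRep x L := by
  refine ⟨reduceCyclically x.toWord,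
    reduceCyclically.isCyclicallyReduced FreeGroup.isReduced_toWord, ?_⟩
  rw [isConj_comm, isConj_iff]
  refine ⟨FreeGroup.mk (reduceCyclically.conjugator x.toWord), ?_⟩
  rw [FreeGroup.inv_mk, FreeGroup.mul_mk, FreeGroup.mul_mk,
    reduceCyclically.conj_conjugator_reduceCyclically, FreeGroup.mk_toWord]

namespace IsCyclicRep

variable {x : F} {L L' : List (Fin 2 × Bool)}

theorem cyclen_eq (h : IsCyclicRep x L) : cyclen x = L.length := by
  rw [cyclen_eq_of_isConj h.isConj]
  apply le_antisymm
  · simpa using (cyclen_le_norm_conj (FreeGroup.mk L) 1).trans (by simpa using FreeGroup.norm_mk_le)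
  · obtain ⟨g, hg⟩ := exists_norm_conj_eq_cyclen (FreeGroup.mk L)
    exact (length_le_norm_conj_of_isCyclicallyReduced h.isCyclicallyReduced g).trans_eq hg

theorem of_isRotated (h : IsCyclicRep x L) (hr : L ~r L') : IsCyclicRep x L' := by
  obtain ⟨l, m, rfl, rfl⟩ := exists_append_of_isRotated hr
  refine ⟨isCyclicallyReduced_append_swap h.isCyclicallyReduced, h.isConj.trans ?_⟩
  rw [← FreeGroup.mul_mk, ← FreeGroup.mul_mk, isConj_iff]
  exact ⟨(FreeGroup.mk l)⁻¹, by group⟩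

end IsCyclicRep

section LetterStatistics

variable {α : Type*} [DecidableEq α]

/-- The number of letters `c` and `c⁻¹` in a word. -/
def letterCount (c : α) (L : List (α × Bool)) : ℕ := L.countP (·.1 = c)

/-- The sign of the exponent of the first letter `c^{±1}` of a word (`true` for `c`). -/
def firstSign (c : α) (L : List (α × Bool)) : Option Bool := (L.find? (·.1 = c)).map Prod.snd

/-- The sign of the exponent of the last letter `c^{±1}` of a word (`true` for `c`). -/
def lastSign (c : α) (L : List (α × Bool)) : Option Bool := firstSign c L.reverse

/-- A letter other than `c^{±1}` is trapped by `c` when the nearest letters `c^{±1}` to its left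
and to its right both have the exponent opposite to its own. This counts the trapped letters of
a word, when `p` and `q` are the signs of the nearest letters `c^{±1}` outside the word. -/
def trappedBetween (c : α) : Option Bool → List (α × Bool) → Option Bool → ℕ
  | _, [], _ => 0
  | p, x :: l, q =>
    if x.1 = c then trappedBetween c (some x.2) l q
    else (if p = some (!x.2) ∧ (firstSign c l).or q = some (!x.2) then 1 else 0) +
      trappedBetween c p l q

/-- The number of letters of a cyclic word trapped by `c`. -/
def trapped (c : α) (L : List (α × Bool)) : ℕ :=
  trappedBetween c (lastSign c L) L (firstSign c L)

variable {c : α} {L L' : List (α × Bool)}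

theorem firstSign_append (c : α) (l m : List (α × Bool)) :
    firstSign c (l ++ m) = (firstSign c l).or (firstSign c m) := by
  simp only [firstSign, List.find?_append, Option.map_or]

theorem lastSign_append (c : α) (l m : List (α × Bool)) :
    lastSign c (l ++ m) = (lastSign c m).or (lastSign c l) := by
  simp [lastSign, firstSign_append]

theorem firstSign_cons (c : α) (x : α × Bool) (l : List (α × Bool)) :
    firstSign c (x :: l) = if x.1 = c then some x.2 else firstSign c l := by
  by_cases h : x.1 = c <;> simp [firstSign, h]

theorem lastSign_cons (c : α) (x : α × Bool) (l : List (α × Bool)) :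
    lastSign c (x :: l) = (lastSign c l).or (if x.1 = c then some x.2 else none) := by
  rw [← List.singleton_append, lastSign_append, lastSign, lastSign, List.reverse_singleton,
    firstSign_cons]
  rfl

theorem trappedBetween_append (c : α) (p : Option Bool) (l m : List (α × Bool))
    (q : Option Bool) :
    trappedBetween c p (l ++ m) q =
      trappedBetween c p l ((firstSign c m).or q) +
        trappedBetween c ((lastSign c l).or p) m q := by
  induction l generalizing p with
  | nil => simp [trappedBetween, lastSign, firstSign]
  | cons x l ih =>
    by_cases h : x.1 = c
    · simp [trappedBetween, lastSign_cons, h, ih]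
    · simp only [List.cons_append, trappedBetween, lastSign_cons, firstSign_append, h, if_false,
        Option.or_none, Option.or_assoc, ih, add_assoc]

theorem trappedBetween_le_length (c : α) (p : Option Bool) (L : List (α × Bool))
    (q : Option Bool) : trappedBetween c p L q ≤ L.length := by
  induction L generalizing p with
  | nil => simp [trappedBetween]
  | cons x l ih =>
    rw [trappedBetween, List.length_cons]
    split_ifs
    · exact (ih _).trans (Nat.le_succ _)
    all_goals linarith [ih p]

theorem trapped_le_length (c : α) (L : List (α × Bool)) : trapped c L ≤ L.length :=
  trappedBetween_le_length ..

theorem trapped_append_comm (c : α) (l m : List (α × Bool)) :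
    trapped c (l ++ m) = trapped c (m ++ l) := by
  have absorb (x y : Option Bool) : x.or (y.or x) = x.or y := by cases x <;> simp
  simp only [trapped, trappedBetween_append, firstSign_append, lastSign_append, absorb]
  exact add_comm _ _

theorem trapped_eq_of_isRotated (h : L ~r L') : trapped c L = trapped c L' := by
  obtain ⟨l, m, rfl, rfl⟩ := exists_append_of_isRotated h
  exact trapped_append_comm ..

theorem letterCount_eq_of_isRotated (h : L ~r L') : letterCount c L = letterCount c L' :=
  h.perm.countP_eq _

end LetterStatistics

section SignChanges

variable {α : Type*}

/-- The number of sign changes in a sequence of signs that is followed by the sign `e`. -/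
def signChangesTo : List Bool → Bool → ℕ
  | [], _ => 0
  | s :: l, e => (if s = l.headD e then 0 else 1) + signChangesTo l e

/-- The number of sign changes between cyclically adjacent letters of a word. -/
def cyclicSignChanges (L : List (α × Bool)) : ℕ :=
  signChangesTo (L.map Prod.snd) ((L.map Prod.snd).headD true)

theorem signChangesTo_append (l m : List Bool) (e : Bool) :
    signChangesTo (l ++ m) e = signChangesTo l (m.headD e) + signChangesTo m e := by
  induction l with
  | nil => simp [signChangesTo]
  | cons s l ih => cases l <;> simp_all [signChangesTo, add_assoc]

theorem signChangesTo_replicate_succ (s e : Bool) (k : ℕ) :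
    signChangesTo (List.replicate (k + 1) s) e = if s = e then 0 else 1 := by
  induction k with
  | zero => simp [signChangesTo]
  | succ k ih => rw [List.replicate_succ, signChangesTo, ih]; simp [List.replicate_succ]

theorem cyclicSignChanges_append_comm (l m : List (α × Bool)) :
    cyclicSignChanges (l ++ m) = cyclicSignChanges (m ++ l) := by
  simp only [cyclicSignChanges, List.map_append, signChangesTo_append]
  cases l <;> cases m <;> simp [add_comm, signChangesTo]

theorem cyclicSignChanges_eq_of_isRotated {L L' : List (α × Bool)} (h : L ~r L') :
    cyclicSignChanges L = cyclicSignChanges L' := by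
  obtain ⟨l, m, rfl, rfl⟩ := exists_append_of_isRotated h
  exact cyclicSignChanges_append_comm ..

end SignChanges

/-- The maximal stretch `o ^ exp` between two consecutive letters `c^{±1}` of a word, whose
exponents have the signs `left` and `right` (`true` for `c`). -/
structure Gap where
  left : Bool
  exp : ℤ
  right : Bool

namespace Gap

/-- The word `c^{±1} o ^ exp c^{±1}` spelled by the gap has no cancellation. -/
protected def IsReduced (g : Gap) : Prop := g.exp = 0 → g.left = g.right

/-- The number of letters of the gap trapped by the letters on its two sides. -/
def trapped (g : Gap) : ℕ :=
  if g.left = !decide (0 < g.exp) ∧ g.right = !decide (0 < g.exp) then g.exp.natAbs else 0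

/-- The number of sign changes from the left end of the gap to its right end. -/
def signChanges (g : Gap) : ℕ :=
  signChangesTo (g.left :: List.replicate g.exp.natAbs (decide (0 < g.exp))) g.right

/-- The twist `c ↦ c * o` maps `c^{±1}` to `o ^ (-lag s) * c^{±1} * o ^ (1 - lag s)`, where `s`
is the sign of the exponent. -/
def lag (s : Bool) : ℤ := if s then 0 else 1

/-- The image of a gap under the twist `c ↦ c * o`. -/
def twist (g : Gap) : Gap := { g with exp := g.exp + (1 - lag g.left - lag g.right) }

variable {g : Gap}

theorem isReduced_twist (h : g.IsReduced) : g.twist.IsReduced := by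
  obtain ⟨_ | _, n, _ | _⟩ := g <;> simp_all [Gap.IsReduced, twist, lag]

theorem signChanges_eq (g : Gap) : g.signChanges =
    if g.exp = 0 then (if g.left = g.right then 0 else 1)
    else (if g.left = decide (0 < g.exp) then 0 else 1) +
      (if decide (0 < g.exp) = g.right then 0 else 1) := by
  by_cases h : g.exp = 0
  · simp [signChanges, signChangesTo, h]
  · obtain ⟨k, hk⟩ := Nat.exists_eq_succ_of_ne_zero (Int.natAbs_ne_zero.2 h)
    rw [signChanges, hk, signChangesTo, signChangesTo_replicate_succ]
    simp [h, List.replicate_succ]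

theorem natAbs_twist_exp_add_signChanges (h : g.IsReduced) :
    g.twist.exp.natAbs + g.signChanges = g.exp.natAbs + 1 := by
  rw [signChanges_eq]
  obtain ⟨_ | _, n, _ | _⟩ := g <;> simp_all [Gap.IsReduced, twist, lag] <;> split_ifs <;> omega

theorem trapped_twist (g : Gap) : g.twist.trapped = g.trapped - 1 := by
  obtain ⟨_ | _, n, _ | _⟩ := g <;> simp [trapped, twist, lag] <;> split_ifs <;> omega

theorem signChanges_le_one (h : g.IsReduced) (ht : g.trapped = 0) : g.signChanges ≤ 1 := by
  rw [signChanges_eq]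
  obtain ⟨_ | _, n, _ | _⟩ := g <;> simp_all [Gap.IsReduced, trapped] <;> grind

theorem signChanges_twist (h : g.IsReduced) (ht : g.trapped = 0) :
    g.twist.signChanges = g.signChanges := by
  rw [signChanges_eq, signChanges_eq]
  obtain ⟨_ | _, n, _ | _⟩ := g <;> simp_all [Gap.IsReduced, trapped, twist, lag] <;> grind

theorem one_le_natAbs_twist_exp (h : g.IsReduced) (ht : g.trapped = 0) :
    1 ≤ g.twist.exp.natAbs := by
  obtain ⟨_ | _, n, _ | _⟩ := g <;> simp_all [Gap.IsReduced, trapped, twist, lag] <;> grind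

end Gap

/-- The sign of the first syllable of `d`, or `e` if there is none. -/
def headSign (d : List (Bool × ℤ)) (e : Bool) : Bool := (d.map Prod.fst).headD e

/-- The gaps of the word with syllables `d`, when this word is followed by a letter `c^{±1}` of
sign `e`. -/
def gapsTo : List (Bool × ℤ) → Bool → List Gap
  | [], _ => []
  | p :: t, e => ⟨p.1, p.2, headSign t e⟩ :: gapsTo t e

/-- The gaps of the cyclic word with syllables `d`. -/
def cyclicGaps (d : List (Bool × ℤ)) : List Gap := gapsTo d (headSign d true)

/-- The syllables of the image under the twist `c ↦ c * o` of the word with syllables `d`, when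
this word is followed by a letter `c^{±1}` of sign `e`. -/
def twistTo (d : List (Bool × ℤ)) (e : Bool) : List (Bool × ℤ) :=
  (gapsTo d e).map fun g ↦ (g.left, g.twist.exp)

/-- The syllables of the image of a cyclic word under the twist `c ↦ c * o`. -/
def cyclicTwist (d : List (Bool × ℤ)) : List (Bool × ℤ) := twistTo d (headSign d true)

theorem headSign_twistTo (d : List (Bool × ℤ)) (e e' : Bool) :
    headSign (twistTo d e) e' = headSign d e' := by
  cases d <;> rfl

theorem gapsTo_twistTo (d : List (Bool × ℤ)) (e : Bool) :
    gapsTo (twistTo d e) e = (gapsTo d e).map Gap.twist := by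
  induction d with
  | nil => rfl
  | cons p t ih =>
    change ⟨p.1, _, headSign (twistTo t e) e⟩ :: gapsTo (twistTo t e) e = _
    rw [headSign_twistTo, ih]
    rfl

theorem cyclicGaps_cyclicTwist (d : List (Bool × ℤ)) :
    cyclicGaps (cyclicTwist d) = (cyclicGaps d).map Gap.twist := by
  rw [cyclicGaps, cyclicTwist, headSign_twistTo, gapsTo_twistTo]
  rfl

section Spell

variable {α : Type*} {c o : α}

/-- The word of `o ^ n`. -/
def block (o : α) (n : ℤ) : List (α × Bool) := List.replicate n.natAbs (o, decide (0 < n))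

/-- The word with syllables `d`: each `(s, n)` in `d` contributes `c * o ^ n` if `s = true` and
`c⁻¹ * o ^ n` if `s = false`. -/
def spell (c o : α) (d : List (Bool × ℤ)) : List (α × Bool) :=
  d.flatMap fun p ↦ (c, p.1) :: block o p.2

theorem spell_cons (c o : α) (p : Bool × ℤ) (t : List (Bool × ℤ)) :
    spell c o (p :: t) = (c, p.1) :: (block o p.2 ++ spell c o t) := by
  simp [spell]

theorem exists_spell_append_singleton (c o : α) (d : List (Bool × ℤ)) (e : Bool) :
    ∃ r, spell c o d ++ [(c, e)] = (c, headSign d e) :: r := by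
  cases d <;> simp [spell, headSign]

theorem isReduced_cons_block_append_iff (h : o ≠ c) {s f : Bool} {n : ℤ} {r : List (α × Bool)} :
    FreeGroup.IsReduced ((c, s) :: (block o n ++ (c, f) :: r)) ↔
      (n = 0 → s = f) ∧ FreeGroup.IsReduced ((c, f) :: r) := by
  rcases hk : n.natAbs with _ | k
  · obtain rfl := Int.natAbs_eq_zero.1 hk
    simp [block, FreeGroup.isReduced_cons_cons]
  · have hn : n ≠ 0 := by omega
    have hblock : FreeGroup.IsReduced (block o n) := List.isChain_replicate_of_rel _ fun _ ↦ rfl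
    have hhead : (block o n).head? = some (o, decide (0 < n)) := by
      simp [block, List.head?_replicate, hn]
    have hlast : (block o n).getLast? = some (o, decide (0 < n)) := by
      simp [block, List.getLast?_replicate, hn]
    rw [FreeGroup.IsReduced] at hblock
    rw [FreeGroup.IsReduced, List.isChain_cons, List.isChain_append, List.head?_append, hlast,
      hhead]
    simp [hblock, hn, h, h.symm, FreeGroup.IsReduced]

theorem isReduced_spell_append_singleton_iff (h : o ≠ c) (d : List (Bool × ℤ)) (e : Bool) :
    FreeGroup.IsReduced (spell c o d ++ [(c, e)]) ↔ ∀ g ∈ gapsTo d e, g.IsReduced := by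
  induction d with
  | nil => simp [spell, gapsTo]
  | cons p t ih =>
    obtain ⟨r, hr⟩ := exists_spell_append_singleton c o t e
    rw [spell_cons, List.cons_append, List.append_assoc, hr, isReduced_cons_block_append_iff h,
      ← hr, ih, gapsTo, List.forall_mem_cons]
    rfl

theorem isCyclicallyReduced_spell_iff (h : o ≠ c) {d : List (Bool × ℤ)} :
    IsCyclicallyReduced (spell c o d) ↔ ∀ g ∈ cyclicGaps d, g.IsReduced := by
  rw [cyclicGaps, ← isReduced_spell_append_singleton_iff h]
  cases d with
  | nil => simp [spell]
  | cons p t =>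
    rw [spell_cons, isCyclicallyReduced_cons_iff]
    rfl

theorem exists_block_eq_cons {s : Bool} {n : ℤ} {l : List (α × Bool)}
    (h : FreeGroup.IsReduced ((o, s) :: (block o n ++ l))) :
    ∃ m, (o, s) :: block o n = block o m := by
  rcases hk : n.natAbs with _ | k
  · refine ⟨if s then 1 else -1, ?_⟩
    cases s <;> simp [block, hk]
  · obtain rfl : s = decide (0 < n) := by
      rw [block, hk, List.replicate_succ, List.cons_append, FreeGroup.isReduced_cons_cons] at h
      exact h.1 rfl
    refine ⟨n + if 0 < n then 1 else -1, ?_⟩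
    rw [block, block, ← List.replicate_succ]
    congr 2
    · split_ifs <;> omega
    · split_ifs <;> simp <;> omega

theorem exists_eq_block_append_spell {L : List (α × Bool)} (h : FreeGroup.IsReduced L)
    (hL : ∀ x ∈ L, x.1 = c ∨ x.1 = o) : ∃ n d, L = block o n ++ spell c o d := by
  induction L with
  | nil => exact ⟨0, [], rfl⟩
  | cons x l ih =>
    obtain ⟨i, s⟩ := x
    obtain ⟨n, d, rfl⟩ := ih h.tail fun y hy ↦ hL y (List.mem_cons_of_mem _ hy)
    obtain rfl | rfl : i = c ∨ i = o := hL _ List.mem_cons_self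
    · exact ⟨0, (s, n) :: d, by rw [spell_cons]; rfl⟩
    · obtain ⟨m, hm⟩ := exists_block_eq_cons h
      exact ⟨m, d, by rw [← List.cons_append, hm]⟩

theorem mk_block (o : α) (n : ℤ) : FreeGroup.mk (block o n) = FreeGroup.of o ^ n := by
  have hpow (x : α × Bool) (k : ℕ) :
      FreeGroup.mk (List.replicate k x) = FreeGroup.mk [x] ^ k := by
    rw [FreeGroup.pow_mk, List.flatten_replicate_singleton]
  rw [block, hpow]
  have hinv : FreeGroup.mk [(o, false)] = (FreeGroup.of o)⁻¹ := rfl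
  rcases lt_trichotomy n 0 with hn | rfl | hn
  · rw [decide_eq_false (by omega), hinv, inv_pow, ← zpow_natCast, ← zpow_neg]
    congr 1
    omega
  · rfl
  · rw [decide_eq_true hn, ← FreeGroup.of, ← zpow_natCast]
    congr 1
    omega

theorem mk_spell_cons (c o : α) (p : Bool × ℤ) (t : List (Bool × ℤ)) :
    FreeGroup.mk (spell c o (p :: t)) =
      FreeGroup.mk [(c, p.1)] * FreeGroup.of o ^ p.2 * FreeGroup.mk (spell c o t) := by
  rw [← mk_block, FreeGroup.mul_mk, FreeGroup.mul_mk, spell_cons]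
  rfl

theorem length_spell (c o : α) (d : List (Bool × ℤ)) (e : Bool) :
    (spell c o d).length = ((gapsTo d e).map fun g ↦ 1 + g.exp.natAbs).sum := by
  induction d with
  | nil => rfl
  | cons p t ih =>
    simp only [spell_cons, gapsTo, block, List.length_cons, List.length_append,
      List.length_replicate, List.map_cons, List.sum_cons, ih]
    omega

theorem signChangesTo_spell (c o : α) (d : List (Bool × ℤ)) (e : Bool) :
    signChangesTo ((spell c o d).map Prod.snd) e = ((gapsTo d e).map Gap.signChanges).sum := by
  induction d with
  | nil => rfl
  | cons p t ih =>
    have hsigns : (spell c o (p :: t)).map Prod.snd =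
        (p.1 :: List.replicate p.2.natAbs (decide (0 < p.2))) ++ (spell c o t).map Prod.snd := by
      simp [spell_cons, block]
    have hhead : ((spell c o t).map Prod.snd).headD e = headSign t e := by
      cases t <;> simp [spell, headSign]
    rw [hsigns, signChangesTo_append, hhead, ih]
    rfl

theorem cyclicSignChanges_spell (c o : α) (d : List (Bool × ℤ)) :
    cyclicSignChanges (spell c o d) = ((cyclicGaps d).map Gap.signChanges).sum := by
  have hhead : ((spell c o d).map Prod.snd).headD true = headSign d true := by
    cases d <;> simp [spell, headSign]
  rw [cyclicSignChanges, hhead, signChangesTo_spell, cyclicGaps]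

theorem cyclicSignChanges_block (o : α) (n : ℤ) : cyclicSignChanges (block o n) = 0 := by
  rw [cyclicSignChanges, block, List.map_replicate]
  cases n.natAbs with
  | zero => rfl
  | succ k => rw [signChangesTo_replicate_succ, List.replicate_succ]; exact if_pos rfl

end Spell

/-- `φ` is the automorphism `c ↦ c * o` fixing `o`; both `σ` and `τ` are of this form. -/
structure IsTwist (φ : MulAut F) (c o : Fin 2) : Prop where
  ne : o ≠ c
  map_marker : φ (FreeGroup.of c) = FreeGroup.of c * FreeGroup.of o
  map_other : φ (FreeGroup.of o) = FreeGroup.of o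

theorem isTwist_sigma : IsTwist σ 0 1 where
  ne := by decide
  map_marker := by simp [σ, mkAut, ga, gb]
  map_other := by simp [σ, mkAut, gb]

theorem isTwist_tau : IsTwist τ 1 0 where
  ne := by decide
  map_marker := by simp [τ, mkAut, ga, gb]
  map_other := by simp [τ, mkAut, ga]

namespace IsTwist

variable {φ : MulAut F} {c o : Fin 2} {x : F} {L : List (Fin 2 × Bool)}

theorem eq_or_eq (h : IsTwist φ c o) (i : Fin 2) : i = c ∨ i = o := by
  have := h.ne
  omega

theorem map_letter (h : IsTwist φ c o) (s : Bool) :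
    φ (FreeGroup.mk [(c, s)]) =
      FreeGroup.of o ^ (-Gap.lag s) * FreeGroup.mk [(c, s)] *
        FreeGroup.of o ^ (1 - Gap.lag s) := by
  cases s
  · have hinv : FreeGroup.mk [(c, false)] = (FreeGroup.of c)⁻¹ := rfl
    simp [hinv, h.map_marker, Gap.lag]
  · rw [← FreeGroup.of, h.map_marker]
    simp [Gap.lag]

theorem map_spell (h : IsTwist φ c o) (d : List (Bool × ℤ)) (e : Bool) :
    φ (FreeGroup.mk (spell c o d)) =
      FreeGroup.of o ^ (-Gap.lag (headSign d e)) * FreeGroup.mk (spell c o (twistTo d e)) *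
        FreeGroup.of o ^ Gap.lag e := by
  induction d with
  | nil => simp [spell, twistTo, gapsTo, headSign, ← FreeGroup.one_eq_mk]
  | cons p t ih =>
    have htwist : twistTo (p :: t) e =
        (p.1, p.2 + (1 - Gap.lag p.1 - Gap.lag (headSign t e))) :: twistTo t e := rfl
    have hhead : headSign (p :: t) e = p.1 := rfl
    have hexp : p.2 + (1 - Gap.lag p.1 - Gap.lag (headSign t e)) =
        (1 - Gap.lag p.1) + p.2 + -Gap.lag (headSign t e) := by ring
    rw [htwist, hhead, mk_spell_cons, mk_spell_cons, map_mul, map_mul, ih, h.map_letter,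
      map_zpow, h.map_other, hexp, zpow_add, zpow_add]
    simp only [mul_assoc]

theorem exists_eq_block (h : IsTwist φ c o) (hL : FreeGroup.IsReduced L)
    (hc : letterCount c L = 0) : ∃ n, L = block o n := by
  obtain ⟨n, d, rfl⟩ := exists_eq_block_append_spell hL fun y _ ↦ h.eq_or_eq y.1
  cases d with
  | nil => exact ⟨n, List.append_nil _⟩
  | cons p t => simp [letterCount, spell_cons] at hc

theorem isCyclicRep_of_letterCount_eq_zero (h : IsTwist φ c o) (hL : IsCyclicRep x L)
    (hc : letterCount c L = 0) : IsCyclicRep (φ x) L := by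
  obtain ⟨n, rfl⟩ := h.exists_eq_block hL.isCyclicallyReduced.isReduced hc
  have hfix : φ (FreeGroup.mk (block o n)) = FreeGroup.mk (block o n) := by
    rw [mk_block, map_zpow, h.map_other]
  refine ⟨hL.isCyclicallyReduced, ?_⟩
  rw [← hfix]
  exact MonoidHom.map_isConj φ.toMonoidHom hL.isConj

theorem exists_isRotated_spell (h : IsTwist φ c o) (hL : IsCyclicRep x L)
    (hc : letterCount c L ≠ 0) : ∃ d, L ~r spell c o d := by
  obtain ⟨⟨_, s⟩, hmem, hy⟩ := List.countP_pos_iff.1 (Nat.pos_of_ne_zero hc)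
  obtain rfl := of_decide_eq_true hy
  obtain ⟨l, m, rfl⟩ := List.append_of_mem hmem
  have hrot := hL.of_isRotated (List.isRotated_append (l := l) (l' := (_, s) :: m))
  obtain ⟨n, d, hd⟩ := exists_eq_block_append_spell
    (hrot.isCyclicallyReduced.isReduced.tail) fun y _ ↦ h.eq_or_eq y.1
  refine ⟨(s, n) :: d, ?_⟩
  rw [spell_cons, ← hd]
  exact List.isRotated_append

theorem isCyclicRep_spell_cyclicTwist (h : IsTwist φ c o) {d : List (Bool × ℤ)}
    (hx : IsCyclicRep x (spell c o d)) :
    IsCyclicRep (φ x) (spell c o (cyclicTwist d)) where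
  isCyclicallyReduced := by
    have hred := (isCyclicallyReduced_spell_iff h.ne).1 hx.isCyclicallyReduced
    rw [isCyclicallyReduced_spell_iff h.ne, cyclicGaps_cyclicTwist, List.forall_mem_map]
    exact fun g hg ↦ Gap.isReduced_twist (hred g hg)
  isConj := by
    have hmap : IsConj (φ x) (φ (FreeGroup.mk (spell c o d))) :=
      MonoidHom.map_isConj φ.toMonoidHom hx.isConj
    refine hmap.trans (isConj_iff.2 ⟨FreeGroup.of o ^ Gap.lag (headSign d true), ?_⟩)
    have hhead : headSign d (headSign d true) = headSign d true := by cases d <;> rfl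
    rw [h.map_spell d (headSign d true), hhead, cyclicTwist]
    group

theorem exists_spell (h : IsTwist φ c o) (hL : IsCyclicRep x L) (hc : letterCount c L ≠ 0) :
    ∃ d, L ~r spell c o d ∧ (∀ g ∈ cyclicGaps d, g.IsReduced) ∧
      IsCyclicRep (φ x) (spell c o (cyclicTwist d)) := by
  obtain ⟨d, hrot⟩ := h.exists_isRotated_spell hL hc
  have hx := hL.of_isRotated hrot
  exact ⟨d, hrot, (isCyclicallyReduced_spell_iff h.ne).1 hx.isCyclicallyReduced,
    h.isCyclicRep_spell_cyclicTwist hx⟩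

end IsTwist

section SpellStatistics

variable {α : Type*} [DecidableEq α] {c o : α}

/-- The sign of the exponents in `block o n`, or `none` if this word is empty. -/
def blockSign (n : ℤ) : Option Bool := if n = 0 then none else some (decide (0 < n))

theorem firstSign_block (o : α) (n : ℤ) : firstSign o (block o n) = blockSign n := by
  rcases hk : n.natAbs with _ | k
  · obtain rfl := Int.natAbs_eq_zero.1 hk
    rfl
  · have hn : n ≠ 0 := by omega
    simp [block, hk, List.replicate_succ, firstSign_cons, blockSign, hn]

theorem lastSign_block (o : α) (n : ℤ) : lastSign o (block o n) = blockSign n := by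
  rw [lastSign, block, List.reverse_replicate]
  exact firstSign_block o n

theorem firstSign_block_of_ne (h : o ≠ c) (n : ℤ) : firstSign c (block o n) = none := by
  simp [firstSign, block, h]

theorem lastSign_block_of_ne (h : o ≠ c) (n : ℤ) : lastSign c (block o n) = none := by
  rw [lastSign, block, List.reverse_replicate]
  exact firstSign_block_of_ne h n

theorem letterCount_block (o : α) (n : ℤ) : letterCount o (block o n) = n.natAbs := by
  simp [letterCount, block, List.countP_replicate]

theorem letterCount_block_of_ne (h : o ≠ c) (n : ℤ) : letterCount c (block o n) = 0 := by
  simp [letterCount, block, h]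

theorem trappedBetween_block (p q : Option Bool) (o : α) (n : ℤ) :
    trappedBetween o p (block o n) q = 0 := by
  rw [block]
  induction n.natAbs generalizing p with
  | zero => rfl
  | succ k ih => rw [List.replicate_succ, trappedBetween, if_pos rfl, ih]

theorem trappedBetween_block_of_ne (h : o ≠ c) (s t : Bool) (n : ℤ) :
    trappedBetween c (some s) (block o n) (some t) = (Gap.mk s n t).trapped := by
  have key (b : Bool) (k : ℕ) :
      trappedBetween c (some s) (List.replicate k (o, b)) (some t) =
        if s = !b ∧ t = !b then k else 0 := by
    have hnone (k : ℕ) : firstSign c (List.replicate k (o, b)) = none := by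
      simp [firstSign, h]
    induction k with
    | zero => simp [trappedBetween]
    | succ k ih =>
      rw [List.replicate_succ, trappedBetween, if_neg h, ih, hnone]
      simp only [Option.some.injEq, Option.none_or]
      split_ifs <;> omega
  exact key _ _

theorem trapped_block_of_ne (h : o ≠ c) (n : ℤ) : trapped c (block o n) = 0 := by
  rw [trapped, lastSign_block_of_ne h, block]
  generalize firstSign c _ = q
  induction n.natAbs with
  | zero => rfl
  | succ k ih => simp [List.replicate_succ, trappedBetween, h, ih]

theorem letterCount_spell_left (h : o ≠ c) (d : List (Bool × ℤ)) (e : Bool) :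
    letterCount c (spell c o d) = (gapsTo d e).length := by
  induction d with
  | nil => rfl
  | cons p t ih =>
    have hblock := letterCount_block_of_ne h p.2
    rw [letterCount] at ih hblock
    simp [letterCount, spell_cons, gapsTo, ih, hblock]

theorem letterCount_spell_right (h : o ≠ c) (d : List (Bool × ℤ)) (e : Bool) :
    letterCount o (spell c o d) = ((gapsTo d e).map fun g ↦ g.exp.natAbs).sum := by
  induction d with
  | nil => rfl
  | cons p t ih =>
    have hblock := letterCount_block o p.2
    rw [letterCount] at ih hblock
    simp [letterCount, spell_cons, gapsTo, ih, hblock, h.symm]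

theorem firstSign_spell_or (c o : α) (d : List (Bool × ℤ)) (e : Bool) :
    (firstSign c (spell c o d)).or (some e) = some (headSign d e) := by
  cases d <;> simp [spell, firstSign, headSign]

theorem trappedBetween_spell (h : o ≠ c) (d : List (Bool × ℤ)) (p : Option Bool) (e : Bool) :
    trappedBetween c p (spell c o d) (some e) = ((gapsTo d e).map Gap.trapped).sum := by
  induction d generalizing p with
  | nil => rfl
  | cons x t ih =>
    rw [spell_cons, trappedBetween, if_pos rfl, trappedBetween_append, firstSign_spell_or,
      trappedBetween_block_of_ne h, ih]
    rfl

theorem trapped_spell (h : o ≠ c) (d : List (Bool × ℤ)) :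
    trapped c (spell c o d) = ((cyclicGaps d).map Gap.trapped).sum := by
  cases d with
  | nil => rfl
  | cons x t =>
    have hfirst : firstSign c (spell c o (x :: t)) = some x.1 := by
      rw [spell_cons, firstSign_cons, if_pos rfl]
    rw [trapped, hfirst, trappedBetween_spell h]
    rfl

end SpellStatistics

namespace Gap

variable {g : Gap} {q : Option Bool}

/- This is why the twist `c ↦ c * o` creates no letter trapped by `o`. -/
theorem blockSign_exp_eq_not_left (h : g.IsReduced)
    (hq : (blockSign g.twist.exp).or q = some (!g.left)) : blockSign g.exp = some (!g.left) := by
  obtain ⟨_ | _, n, _ | _⟩ := g <;> simp_all [Gap.IsReduced, blockSign, twist, lag] <;> grind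

theorem blockSign_exp_eq_not_right (h : g.IsReduced)
    (hq : (blockSign g.twist.exp).or q = some (!g.right)) :
    blockSign g.exp = some (!g.right) := by
  obtain ⟨_ | _, n, _ | _⟩ := g <;> simp_all [Gap.IsReduced, blockSign, twist, lag] <;> grind

end Gap

section TwistedSpell

variable {α : Type*} [DecidableEq α] {c o : α}

theorem trappedBetween_spell_twistTo_le (h : o ≠ c) {d : List (Bool × ℤ)} {e : Bool}
    (hred : ∀ g ∈ gapsTo d e, g.IsReduced) {p p' : Option Bool} (q q' : Option Bool)
    (hp : p' = some (!headSign d e) → p = some (!headSign d e)) :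
    trappedBetween o p' (spell c o (twistTo d e)) q' ≤ trappedBetween o p (spell c o d) q := by
  induction d generalizing p p' with
  | nil => rfl
  | cons x t ih =>
    set g : Gap := ⟨x.1, x.2, headSign t e⟩ with hg
    have hgred : g.IsReduced := hred g List.mem_cons_self
    have htwist : twistTo (x :: t) e = (x.1, g.twist.exp) :: twistTo t e := rfl
    have hfirst : (blockSign g.twist.exp).or ((firstSign o (spell c o (twistTo t e))).or q') =
        some (!x.1) → blockSign x.2 = some (!x.1) := Gap.blockSign_exp_eq_not_left hgred
    have hrest := ih (fun g hg ↦ hred g (List.mem_cons_of_mem _ hg))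
      (p := (blockSign x.2).or p) (p' := (blockSign g.twist.exp).or p') fun hp' ↦ by
        have := Gap.blockSign_exp_eq_not_right hgred hp'
        simpa [hg] using Or.inl this
    rw [htwist, spell_cons, spell_cons, trappedBetween, trappedBetween, if_neg h.symm,
      if_neg h.symm, trappedBetween_append, trappedBetween_append, trappedBetween_block,
      trappedBetween_block, firstSign_append, firstSign_append, firstSign_block, firstSign_block,
      lastSign_block, lastSign_block, zero_add, zero_add, Option.or_assoc, Option.or_assoc]
    refine add_le_add ?_ hrest
    split_ifs with htrapped hfree
    · exact le_rfl
    · refine absurd ⟨hp htrapped.1, ?_⟩ hfree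
      rw [hfirst htrapped.2, Option.some_or]
    all_goals exact Nat.zero_le _

theorem lastSign_spell_eq_not_of_twistTo (h : o ≠ c) {d : List (Bool × ℤ)} {e : Bool}
    (hred : ∀ g ∈ gapsTo d e, g.IsReduced) {p p' : Option Bool}
    (hp : p' = some (!headSign d e) → p = some (!headSign d e))
    (hlast : (lastSign o (spell c o (twistTo d e))).or p' = some (!e)) :
    (lastSign o (spell c o d)).or p = some (!e) := by
  induction d generalizing p p' with
  | nil => exact hp hlast
  | cons x t ih =>
    set g : Gap := ⟨x.1, x.2, headSign t e⟩ with hg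
    have hgred : g.IsReduced := hred g List.mem_cons_self
    have htwist : twistTo (x :: t) e = (x.1, g.twist.exp) :: twistTo t e := rfl
    rw [htwist, spell_cons, lastSign_cons, if_neg h.symm, Option.or_none, lastSign_append,
      lastSign_block, Option.or_assoc] at hlast
    rw [spell_cons, lastSign_cons, if_neg h.symm, Option.or_none, lastSign_append,
      lastSign_block, Option.or_assoc]
    refine ih (fun g hg ↦ hred g (List.mem_cons_of_mem _ hg)) (fun hp' ↦ ?_) hlast
    have := Gap.blockSign_exp_eq_not_right hgred hp'
    simpa [hg] using Or.inl this

theorem trapped_spell_cyclicTwist_le (h : o ≠ c) {d : List (Bool × ℤ)}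
    (hred : ∀ g ∈ cyclicGaps d, g.IsReduced) :
    trapped o (spell c o (cyclicTwist d)) ≤ trapped o (spell c o d) := by
  have hhead : headSign d (headSign d true) = headSign d true := by cases d <;> rfl
  refine trappedBetween_spell_twistTo_le h hred _ _ fun hlast ↦ ?_
  rw [hhead] at hlast ⊢
  have := lastSign_spell_eq_not_of_twistTo h hred (p := none) (p' := none) (by simp)
    (by rwa [Option.or_none])
  rwa [Option.or_none] at this

end TwistedSpell

theorem Gap.sum_trapped_twist_le (G : List Gap) :
    (G.map fun g ↦ g.twist.trapped).sum ≤ (G.map Gap.trapped).sum - 1 := by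
  induction G with
  | nil => rfl
  | cons g G ih =>
    simp only [List.map_cons, List.sum_cons, Gap.trapped_twist] at ih ⊢
    omega

namespace IsTwist

variable {φ χ : MulAut F} {c o : Fin 2} {x : F} {L : List (Fin 2 × Bool)}

/- Since sign changes do not refer to the marker, this formula treats `σ` and `τ` alike. -/
theorem cyclen_apply_add_cyclicSignChanges (h : IsTwist φ c o) (hL : IsCyclicRep x L) :
    cyclen (φ x) + cyclicSignChanges L = L.length + letterCount c L := by
  by_cases hc : letterCount c L = 0
  · obtain ⟨n, rfl⟩ := h.exists_eq_block hL.isCyclicallyReduced.isReduced hc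
    rw [(h.isCyclicRep_of_letterCount_eq_zero hL hc).cyclen_eq, cyclicSignChanges_block, hc]
  · obtain ⟨d, hrot, hred, hφ⟩ := h.exists_spell hL hc
    have hgap : ∀ g ∈ cyclicGaps d,
        1 + g.twist.exp.natAbs + g.signChanges = 1 + g.exp.natAbs + 1 := fun g hg ↦ by
      linarith [Gap.natAbs_twist_exp_add_signChanges (hred g hg)]
    rw [hφ.cyclen_eq, cyclicSignChanges_eq_of_isRotated hrot, hrot.perm.length_eq,
      letterCount_eq_of_isRotated hrot, cyclicSignChanges_spell, letterCount_spell_left h.ne,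
      length_spell c o _ (headSign (cyclicTwist d) true), length_spell c o d (headSign d true)]
    change ((cyclicGaps (cyclicTwist d)).map _).sum + _ = _ + (cyclicGaps d).length
    rw [cyclicGaps_cyclicTwist, List.map_map, ← List.sum_map_add]
    refine (congrArg List.sum (List.map_congr_left hgap)).trans ?_
    rw [List.sum_map_add]
    simp [cyclicGaps]

theorem exists_trapped_marker_le_sub_one (h : IsTwist φ c o) (hL : IsCyclicRep x L) :
    ∃ L', IsCyclicRep (φ x) L' ∧ trapped c L' ≤ trapped c L - 1 := by
  by_cases hc : letterCount c L = 0
  · refine ⟨L, h.isCyclicRep_of_letterCount_eq_zero hL hc, ?_⟩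
    obtain ⟨n, rfl⟩ := h.exists_eq_block hL.isCyclicallyReduced.isReduced hc
    rw [trapped_block_of_ne h.ne]
  · obtain ⟨d, hrot, -, hφ⟩ := h.exists_spell hL hc
    refine ⟨_, hφ, ?_⟩
    rw [trapped_eq_of_isRotated hrot, trapped_spell h.ne, trapped_spell h.ne,
      cyclicGaps_cyclicTwist, List.map_map]
    exact Gap.sum_trapped_twist_le _

theorem exists_trapped_other_le (h : IsTwist φ c o) (hL : IsCyclicRep x L) :
    ∃ L', IsCyclicRep (φ x) L' ∧ trapped o L' ≤ trapped o L := by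
  by_cases hc : letterCount c L = 0
  · exact ⟨L, h.isCyclicRep_of_letterCount_eq_zero hL hc, le_rfl⟩
  · obtain ⟨d, hrot, hred, hφ⟩ := h.exists_spell hL hc
    refine ⟨_, hφ, ?_⟩
    rw [trapped_eq_of_isRotated hrot]
    exact trapped_spell_cyclicTwist_le h.ne hred

theorem exists_trapped_marker_pow_le_sub (h : IsTwist φ c o) (hL : IsCyclicRep x L) (n : ℕ) :
    ∃ L', IsCyclicRep ((φ ^ n) x) L' ∧ trapped c L' ≤ trapped c L - n := by
  induction n with
  | zero => exact ⟨L, hL, le_rfl⟩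
  | succ n ih =>
    obtain ⟨M, hM, hMn⟩ := ih
    obtain ⟨L', hL', hle⟩ := h.exists_trapped_marker_le_sub_one hM
    exact ⟨L', by rwa [pow_succ'], by omega⟩

theorem exists_trapped_other_pow_le (h : IsTwist φ c o) (hL : IsCyclicRep x L) (n : ℕ) :
    ∃ L', IsCyclicRep ((φ ^ n) x) L' ∧ trapped o L' ≤ trapped o L := by
  induction n with
  | zero => exact ⟨L, hL, le_rfl⟩
  | succ n ih =>
    obtain ⟨M, hM, hMn⟩ := ih
    obtain ⟨L', hL', hle⟩ := h.exists_trapped_other_le hM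
    exact ⟨L', by rwa [pow_succ'], hle.trans hMn⟩

theorem gap_trapped_eq_zero (h : IsTwist φ c o) {d : List (Bool × ℤ)} (hrot : L ~r spell c o d)
    (ht : trapped c L = 0) : ∀ g ∈ cyclicGaps d, g.trapped = 0 := by
  rw [trapped_eq_of_isRotated hrot, trapped_spell h.ne, List.sum_eq_zero_iff] at ht
  simpa using ht

theorem cyclicSignChanges_le_letterCount (h : IsTwist φ c o) (hL : IsCyclicRep x L)
    (ht : trapped c L = 0) : cyclicSignChanges L ≤ letterCount c L := by
  by_cases hc : letterCount c L = 0
  · obtain ⟨n, rfl⟩ := h.exists_eq_block hL.isCyclicallyReduced.isReduced hc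
    rw [cyclicSignChanges_block]
    exact Nat.zero_le _
  · obtain ⟨d, hrot, hred, -⟩ := h.exists_spell hL hc
    have hzero := h.gap_trapped_eq_zero hrot ht
    rw [cyclicSignChanges_eq_of_isRotated hrot, letterCount_eq_of_isRotated hrot,
      cyclicSignChanges_spell, letterCount_spell_left h.ne d (headSign d true)]
    simpa [cyclicGaps] using List.sum_le_card_nsmul ((cyclicGaps d).map Gap.signChanges) 1
      (by simpa using fun g hg ↦ Gap.signChanges_le_one (hred g hg) (hzero g hg))

theorem exists_isCyclicRep_apply_of_trapped_eq_zero (h : IsTwist φ c o) (hL : IsCyclicRep x L)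
    (ht : trapped c L = 0) :
    ∃ L', IsCyclicRep (φ x) L' ∧ trapped c L' = 0 ∧ letterCount c L' = letterCount c L ∧
      cyclicSignChanges L' = cyclicSignChanges L ∧ letterCount c L ≤ letterCount o L' := by
  by_cases hc : letterCount c L = 0
  · exact ⟨L, h.isCyclicRep_of_letterCount_eq_zero hL hc, ht, rfl, rfl, hc ▸ Nat.zero_le _⟩
  · obtain ⟨d, hrot, hred, hφ⟩ := h.exists_spell hL hc
    have hzero := h.gap_trapped_eq_zero hrot ht
    have hmap {f : Gap → ℕ} : ((cyclicGaps (cyclicTwist d)).map f) =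
        (cyclicGaps d).map fun g ↦ f g.twist := by
      rw [cyclicGaps_cyclicTwist, List.map_map]
      rfl
    have hcount : letterCount c L = (cyclicGaps d).length := by
      rw [letterCount_eq_of_isRotated hrot]
      exact letterCount_spell_left h.ne d _
    refine ⟨_, hφ, ?_, ?_, ?_, ?_⟩
    · rw [trapped_spell h.ne, hmap, ← Nat.le_zero, ← Nat.zero_sub 1, ← ht,
        trapped_eq_of_isRotated hrot, trapped_spell h.ne]
      exact Gap.sum_trapped_twist_le _
    · rw [hcount, letterCount_spell_left h.ne, ← cyclicGaps, cyclicGaps_cyclicTwist,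
        List.length_map]
    · rw [cyclicSignChanges_eq_of_isRotated hrot, cyclicSignChanges_spell,
        cyclicSignChanges_spell, hmap]
      exact congrArg List.sum (List.map_congr_left fun g hg ↦
        Gap.signChanges_twist (hred g hg) (hzero g hg))
    · rw [hcount, letterCount_spell_right h.ne, ← cyclicGaps, hmap]
      simpa using List.card_nsmul_le_sum ((cyclicGaps d).map fun g ↦ g.twist.exp.natAbs) 1
        (by simpa using fun g hg ↦ Gap.one_le_natAbs_twist_exp (hred g hg) (hzero g hg))

theorem cyclen_pow_succ_add (h : IsTwist φ c o) (hL : IsCyclicRep x L) (ht : trapped c L = 0)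
    (n : ℕ) : cyclen ((φ ^ (n + 1)) x) + cyclicSignChanges L =
      cyclen ((φ ^ n) x) + letterCount c L := by
  induction n generalizing x L with
  | zero => simpa [hL.cyclen_eq] using h.cyclen_apply_add_cyclicSignChanges hL
  | succ n ih =>
    obtain ⟨L', hL', ht', hcount, hchanges, -⟩ :=
      h.exists_isCyclicRep_apply_of_trapped_eq_zero hL ht
    rw [← hcount, ← hchanges, pow_succ, pow_succ φ n]
    exact ih hL' ht'

theorem cyclen_pow_succ_eq_iff (h : IsTwist φ c o) (hL : IsCyclicRep x L)
    (ht : trapped c L = 0) (n : ℕ) :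
    cyclen ((φ ^ (n + 1)) x) = cyclen ((φ ^ n) x) ↔ cyclen (φ x) = cyclen x := by
  have hn := h.cyclen_pow_succ_add hL ht n
  have hzero := h.cyclen_apply_add_cyclicSignChanges hL
  rw [hL.cyclen_eq]
  omega

theorem cyclen_apply_eq_of_cyclen_apply_apply_eq (h : IsTwist φ c o) (h' : IsTwist χ o c)
    (hL : IsCyclicRep x L) (ht : trapped c L = 0) (heq : cyclen (χ (φ x)) = cyclen (φ x)) :
    cyclen (φ x) = cyclen x := by
  obtain ⟨L', hL', -, -, hchanges, hle⟩ := h.exists_isCyclicRep_apply_of_trapped_eq_zero hL ht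
  have hφ := h.cyclen_apply_add_cyclicSignChanges hL
  have hχ := h'.cyclen_apply_add_cyclicSignChanges hL'
  have hsle := h.cyclicSignChanges_le_letterCount hL ht
  rw [hL.cyclen_eq]
  rw [heq, hL'.cyclen_eq] at hχ
  omega

end IsTwist

theorem exists_isCyclicRep_chainC1_trapped_le (x : F) (c : List (ℕ × ℕ)) :
    ∃ L, IsCyclicRep (chainC1 c x) L ∧ trapped 0 L ≤ cyclen x - sigmaCount c := by
  induction c with
  | nil =>
    obtain ⟨L, hL⟩ := exists_isCyclicRep x
    exact ⟨L, hL, (trapped_le_length 0 L).trans_eq hL.cyclen_eq.symm⟩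
  | cons p t ih =>
    obtain ⟨L, hL, hle⟩ := ih
    obtain ⟨M, hM, hMle⟩ := isTwist_sigma.exists_trapped_marker_pow_le_sub hL p.1
    obtain ⟨N, hN, hNle⟩ := isTwist_tau.exists_trapped_other_pow_le hM p.2
    refine ⟨N, by simpa [chainC1] using hN, ?_⟩
    have hcount : sigmaCount (p :: t) = p.1 + sigmaCount t := by simp [sigmaCount]
    omega

theorem exists_isCyclicRep_chainC1_trapped_eq_zero {x : F} {c : List (ℕ × ℕ)}
    (h : cyclen x ≤ sigmaCount c) : ∃ L, IsCyclicRep (chainC1 c x) L ∧ trapped 0 L = 0 := by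
  obtain ⟨L, hL, hle⟩ := exists_isCyclicRep_chainC1_trapped_le x c
  exact ⟨L, hL, by omega⟩

theorem stmt10_general {u v : F} {c₁ : List (ℕ × ℕ)} (hu : cyclen u ≤ sigmaCount c₁)
    (hv : cyclen v ≤ sigmaCount c₁) {k : ℕ}
    (H : cyclen ((σ ^ (k + 1)) (chainC1 c₁ u)) = cyclen ((σ ^ k) (chainC1 c₁ u)) ↔
      cyclen ((σ ^ (k + 1)) (chainC1 c₁ v)) = cyclen ((σ ^ k) (chainC1 c₁ v)))
    (h : cyclen (τ ((σ * chainC1 c₁) u)) = cyclen ((σ * chainC1 c₁) u) ∨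
         cyclen (τ ((σ * chainC1 c₁) v)) = cyclen ((σ * chainC1 c₁) v)) :
    cyclen (σ (chainC1 c₁ u)) = cyclen (chainC1 c₁ u) ∧
    cyclen (σ (chainC1 c₁ v)) = cyclen (chainC1 c₁ v) := by
  obtain ⟨L, hL, hLt⟩ := exists_isCyclicRep_chainC1_trapped_eq_zero hu
  obtain ⟨M, hM, hMt⟩ := exists_isCyclicRep_chainC1_trapped_eq_zero hv
  rw [isTwist_sigma.cyclen_pow_succ_eq_iff hL hLt,
    isTwist_sigma.cyclen_pow_succ_eq_iff hM hMt] at H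
  rcases h with h | h
  · have hσ := isTwist_sigma.cyclen_apply_eq_of_cyclen_apply_apply_eq isTwist_tau hL hLt h
    exact ⟨hσ, H.1 hσ⟩
  · have hσ := isTwist_sigma.cyclen_apply_eq_of_cyclen_apply_apply_eq isTwist_tau hM hMt h
    exact ⟨H.2 hσ, hσ⟩

/-- Corollary 4.5 (ii):  here `k = ‖u‖ + 1` and `ψ = σψ₁ = chainC1 ((1,0) :: c₁)`. -/
theorem stmt10 (u v : F) (huv : cyclen v ≤ cyclen u)
    (c₁ : List (ℕ × ℕ)) (hne : c₁ ≠ []) (hσ : cyclen u + 1 ≤ sigmaCount c₁)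
    (H : ∀ c' : List (ℕ × ℕ), c' ≠ [] → chainLen c' ≤ 1 + chainLen c₁ →
      ((cyclen ((σ ^ (cyclen u + 2)) (chainC1 c' u)) = cyclen ((σ ^ (cyclen u + 1)) (chainC1 c' u)) ↔
        cyclen ((σ ^ (cyclen u + 2)) (chainC1 c' v)) = cyclen ((σ ^ (cyclen u + 1)) (chainC1 c' v))) ∧
       (cyclen ((τ ^ (cyclen u + 2)) (chainC1 c' u)) = cyclen ((τ ^ (cyclen u + 1)) (chainC1 c' u)) ↔
        cyclen ((τ ^ (cyclen u + 2)) (chainC1 c' v)) = cyclen ((τ ^ (cyclen u + 1)) (chainC1 c' v)))))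
    (h : cyclen (τ ((σ * chainC1 c₁) u)) = cyclen ((σ * chainC1 c₁) u) ∨
         cyclen (τ ((σ * chainC1 c₁) v)) = cyclen ((σ * chainC1 c₁) v)) :
    cyclen (σ (chainC1 c₁ u)) = cyclen (chainC1 c₁ u) ∧
    cyclen (σ (chainC1 c₁ v)) = cyclen (chainC1 c₁ v) := by
  exact stmt10_general (by omega) (by omega) (H c₁ hne (Nat.le_add_left _ _)).1 h
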